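/- Let s: 𝒯_G → H be continuous and 2πℤⁿ-periodic, holomorphic on the open tube {k ∈ ℂⁿ : Im k ∈ int G}, and infinitely differentiable up to the boundary of 𝒯_G (all partial derivatives of s with respect to Re k extend continuously and boundedly to 𝒯_G). For γ ∈ ℤⁿ and α ∈ G define s_γ := (2π)^{-n} ∫_{[-π,π]ⁿ} s(β + iα) e^{i(β+iα)·γ} dβ. Then s_γ is independent of the choice of α ∈ G; for every N > 0 there is a constant C_N with ‖s_γ‖ ≤ C_N (1+|γ|)^{-N} e^{-h_G(γ)} for all γ ∈ ℤⁿ; and s(k) = ∑_{γ∈ℤⁿ} s_γ e^{-i k·γ} for all k ∈ 𝒯_G. -/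

import Mathlib

/-!
For fixed `α ∈ G` the slice `g(β) = s(β + iα)` is a smooth `2πℤⁿ`-periodic function on `ℝⁿ`, and
`s_γ = e^{-α·γ} c_γ`, where `c_γ` is the Fourier coefficient of `g` (`tubeCoeff_eq`). Everything
follows from classical facts about Fourier series applied to slices.

*Independence of `α`* (`integral_slice_eq`). The integrand `F(k) = e^{ik·γ} s(k)` is periodic, and
holomorphic inside the tube. Differentiating `∫ F(β + iα) dβ` along `α` in the direction `v` gives,
by the Cauchy-Riemann equations, `i ∫ ∂_v F(β + iα) dβ`, the integral of a derivative of a periodic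
function over a period cell; it vanishes because integrals over a period cell are invariant under
translations (`integral_cube_fderiv`). A boundary point of `G` is reached along a segment from an
interior point, using only continuity of the integral at the end of the segment.

*Decay* (`norm_cubeCoeff_le`). Integrating by parts `m` times in the coordinate where `|γ_j|` is
largest bounds `|γ_j|^m ‖c_γ‖` by a bound on the `m`-th derivative of the slice, uniformly in the
slice. As `α` is free, it may be chosen to maximize `α·γ` over `G`, so that
`e^{-α·γ} = e^{-h_G(γ)}`.

*Inversion* (`hasSum_cubeCoeff`). Since `α·γ ≤ h_G(γ)`, the decay estimate makes the Fourier
coefficients of every slice absolutely summable. The Fourier series of `⟨v, g⟩` then converges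
to `⟨v, g⟩` for each `v ∈ H`, by the scalar theorem on the torus `(ℝ/ℤ)ⁿ`, to which periodic
functions are transferred by `torusFn`. Testing against all `v` identifies the sum of the vector
valued series.
-/

set_option autoImplicit false

open MeasureTheory Filter

noncomputable section

/-- The partial derivative of a function on `ℝⁿ` in the `i`-th coordinate direction. -/
def pd {n : ℕ} {E : Type*} [NormedAddCommGroup E] [NormedSpace ℝ E]
    (i : Fin n) (u : (Fin n → ℝ) → E) (x : Fin n → ℝ) : E :=
  fderiv ℝ u x (Pi.single i 1)

/-- `ℤⁿ`-periodicity of a function on `ℝⁿ`. -/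
def ZPeriodic {n : ℕ} {α : Type*} (f : (Fin n → ℝ) → α) : Prop :=
  ∀ (x : Fin n → ℝ) (γ : Fin n → ℤ), f (x + fun i => (γ i : ℝ)) = f x

/-- The dot product `ξ · x` of two real vectors. -/
def dotR {n : ℕ} (ξ x : Fin n → ℝ) : ℝ := ∑ i, ξ i * x i

/-- The pairing `k · x` of a complex vector `k` with a real vector `x`. -/
def dotCR {n : ℕ} (k : Fin n → ℂ) (x : Fin n → ℝ) : ℂ := ∑ i, k i * (x i : ℂ)

/-- The second-order operator
`Pu(x) = -∑ a_{ij}(x) ∂_i∂_j u(x) + ∑ b_i(x) ∂_i u(x) + c(x) u(x)`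
acting on real-valued functions. -/
def Pop {n : ℕ} (a : (Fin n → ℝ) → Fin n → Fin n → ℝ) (b : (Fin n → ℝ) → Fin n → ℝ)
    (c : (Fin n → ℝ) → ℝ) (u : (Fin n → ℝ) → ℝ) (x : Fin n → ℝ) : ℝ :=
  -(∑ i, ∑ j, a x i j * pd i (pd j u) x) + ∑ i, b x i * pd i u x + c x * u x

/-- The same operator `P` acting on complex-valued functions. -/
def PopC {n : ℕ} (a : (Fin n → ℝ) → Fin n → Fin n → ℝ) (b : (Fin n → ℝ) → Fin n → ℝ)
    (c : (Fin n → ℝ) → ℝ) (u : (Fin n → ℝ) → ℂ) (x : Fin n → ℝ) : ℂ :=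
  -(∑ i, ∑ j, (a x i j : ℂ) * pd i (pd j u) x) + ∑ i, (b x i : ℂ) * pd i u x + (c x : ℂ) * u x

/-- The formal adjoint `P*v = -∑ ∂_i∂_j(a_{ij} v) - ∑ ∂_i(b_i v) + c v`
acting on real-valued functions. -/
def Padj {n : ℕ} (a : (Fin n → ℝ) → Fin n → Fin n → ℝ) (b : (Fin n → ℝ) → Fin n → ℝ)
    (c : (Fin n → ℝ) → ℝ) (v : (Fin n → ℝ) → ℝ) (x : Fin n → ℝ) : ℝ :=
  -(∑ i, ∑ j, pd i (pd j fun z => a z i j * v z) x) - (∑ i, pd i (fun y => b y i * v y) x)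
    + c x * v x

/-- The formal adjoint `P*` acting on complex-valued functions. -/
def PadjC {n : ℕ} (a : (Fin n → ℝ) → Fin n → Fin n → ℝ) (b : (Fin n → ℝ) → Fin n → ℝ)
    (c : (Fin n → ℝ) → ℝ) (v : (Fin n → ℝ) → ℂ) (x : Fin n → ℝ) : ℂ :=
  -(∑ i, ∑ j, pd i (pd j fun z => (a z i j : ℂ) * v z) x)
    - (∑ i, pd i (fun y => (b y i : ℂ) * v y) x) + (c x : ℂ) * v x

/-- The standing assumptions on the operator `P`: the coefficients are real-valued,
`ℤⁿ`-periodic, `a_{ij} ∈ C²`, `b_i ∈ C¹`, `c` continuous, and the uniform ellipticity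
condition `∑ a_{ij}(x) ζ_i ζ_j ≥ a₀ |ζ|²` holds. -/
def IsPeriodicElliptic {n : ℕ} (a : (Fin n → ℝ) → Fin n → Fin n → ℝ)
    (b : (Fin n → ℝ) → Fin n → ℝ) (c : (Fin n → ℝ) → ℝ) : Prop :=
  (∀ i j, ContDiff ℝ 2 fun x => a x i j) ∧ (∀ i, ContDiff ℝ 1 fun x => b x i) ∧
    Continuous c ∧ ZPeriodic a ∧ ZPeriodic b ∧ ZPeriodic c ∧
    ∃ a₀ : ℝ, 0 < a₀ ∧
      ∀ x ζ : Fin n → ℝ, a₀ * ∑ i, ζ i ^ 2 ≤ ∑ i, ∑ j, a x i j * ζ i * ζ j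

/-- `lam` is a real number such that `Pu = lam·u` admits a positive solution of the form
`u(x) = e^{ξ·x} p(x)` with `p` positive, `C²` and `ℤⁿ`-periodic. -/
def IsPrincipalEV {n : ℕ} (a : (Fin n → ℝ) → Fin n → Fin n → ℝ)
    (b : (Fin n → ℝ) → Fin n → ℝ) (c : (Fin n → ℝ) → ℝ) (ξ : Fin n → ℝ) (lam : ℝ) : Prop :=
  ∃ p : (Fin n → ℝ) → ℝ, ContDiff ℝ 2 p ∧ (∀ x, 0 < p x) ∧ ZPeriodic p ∧
    ∀ x, Pop a b c (fun y => Real.exp (dotR ξ y) * p y) x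
      = lam * (Real.exp (dotR ξ x) * p x)

/-- The generalized principal eigenvalue
`Λ₀ = sup {λ ∈ ℝ : ∃ u > 0 with Pu = λu in ℝⁿ}`. -/
def gpev {n : ℕ} (a : (Fin n → ℝ) → Fin n → Fin n → ℝ) (b : (Fin n → ℝ) → Fin n → ℝ)
    (c : (Fin n → ℝ) → ℝ) : ℝ :=
  sSup {lam : ℝ | ∃ u : (Fin n → ℝ) → ℝ, ContDiff ℝ 2 u ∧ (∀ x, 0 < u x) ∧
    ∀ x, Pop a b c u x = lam * u x}

/-- `k` belongs to the Fermi surface `F_P`: the equation `Pu = 0` admits a nonzero Bloch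
solution `u(x) = e^{i k·x} p(x)` with `p` `ℤⁿ`-periodic. -/
def InFermi {n : ℕ} (a : (Fin n → ℝ) → Fin n → Fin n → ℝ) (b : (Fin n → ℝ) → Fin n → ℝ)
    (c : (Fin n → ℝ) → ℝ) (k : Fin n → ℂ) : Prop :=
  ∃ p : (Fin n → ℝ) → ℂ, ContDiff ℝ 2 p ∧ ZPeriodic p ∧ (∃ x, p x ≠ 0) ∧
    ∀ x, PopC a b c (fun y => Complex.exp (Complex.I * dotCR k y) * p y) x = 0

/-- `(k, lam)` belongs to the Bloch variety `B_P`: the equation `Pu = lam·u` admits a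
nonzero Bloch solution with quasimomentum `k`. -/
def InBloch {n : ℕ} (a : (Fin n → ℝ) → Fin n → Fin n → ℝ) (b : (Fin n → ℝ) → Fin n → ℝ)
    (c : (Fin n → ℝ) → ℝ) (k : Fin n → ℂ) (lam : ℂ) : Prop :=
  ∃ p : (Fin n → ℝ) → ℂ, ContDiff ℝ 2 p ∧ ZPeriodic p ∧ (∃ x, p x ≠ 0) ∧
    ∀ x, PopC a b c (fun y => Complex.exp (Complex.I * dotCR k y) * p y) x
      = lam * (Complex.exp (Complex.I * dotCR k x) * p x)

/-- `k` belongs to the Fermi surface `F_{P*}` of the formal adjoint. -/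
def InFermiAdj {n : ℕ} (a : (Fin n → ℝ) → Fin n → Fin n → ℝ) (b : (Fin n → ℝ) → Fin n → ℝ)
    (c : (Fin n → ℝ) → ℝ) (k : Fin n → ℂ) : Prop :=
  ∃ p : (Fin n → ℝ) → ℂ, ContDiff ℝ 2 p ∧ ZPeriodic p ∧ (∃ x, p x ≠ 0) ∧
    ∀ x, PadjC a b c (fun y => Complex.exp (Complex.I * dotCR k y) * p y) x = 0

/-- `(k, lam)` belongs to the Bloch variety `B_{P*}` of the formal adjoint. -/
def InBlochAdj {n : ℕ} (a : (Fin n → ℝ) → Fin n → Fin n → ℝ) (b : (Fin n → ℝ) → Fin n → ℝ)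
    (c : (Fin n → ℝ) → ℝ) (k : Fin n → ℂ) (lam : ℂ) : Prop :=
  ∃ p : (Fin n → ℝ) → ℂ, ContDiff ℝ 2 p ∧ ZPeriodic p ∧ (∃ x, p x ≠ 0) ∧
    ∀ x, PadjC a b c (fun y => Complex.exp (Complex.I * dotCR k y) * p y) x
      = lam * (Complex.exp (Complex.I * dotCR k x) * p x)

/-- The Euclidean norm of an integer vector `γ ∈ ℤⁿ`. -/
def enormZ {n : ℕ} (γ : Fin n → ℤ) : ℝ := Real.sqrt (∑ i, ((γ i : ℝ)) ^ 2)

/-- The support (indicator) function `h_G(x) = sup_{ξ ∈ G} ξ · x` of a set `G ⊆ ℝⁿ`. -/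
def suppFn {n : ℕ} (G : Set (Fin n → ℝ)) (x : Fin n → ℝ) : ℝ :=
  sSup ((fun ξ => dotR ξ x) '' G)

/-- The closed tube `𝒯_G = {k ∈ ℂⁿ : Im k ∈ G}` over a set `G ⊆ ℝⁿ`. -/
def tubeOver {n : ℕ} (G : Set (Fin n → ℝ)) : Set (Fin n → ℂ) :=
  {k | (fun i => (k i).im) ∈ G}

/-! ### Periodic functions and integrals over a period cell -/

/-- Invariance under translation by `2πℤⁿ`. -/
def TwoPiPeriodic {n : ℕ} {E : Type*} (u : (Fin n → ℝ) → E) : Prop :=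
  ∀ (x : Fin n → ℝ) (γ : Fin n → ℤ), u (x + fun i => 2 * Real.pi * γ i) = u x

/-- The function on `(ℝ/ℤ)ⁿ` obtained from a `2πℤⁿ`-periodic `u` by rescaling. It is defined
through arbitrary representatives, hence meaningful only when `u` is periodic. -/
def torusFn {n : ℕ} {E : Type*} (u : (Fin n → ℝ) → E) : UnitAddTorus (Fin n) → E :=
  fun t => u fun i => 2 * Real.pi * (Quotient.out (t i) : ℝ)

lemma torusFn_coe {n : ℕ} {E : Type*} {u : (Fin n → ℝ) → E} (hu : TwoPiPeriodic u)
    (x : Fin n → ℝ) :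
    torusFn u (fun i => (x i : UnitAddCircle)) = u fun i => 2 * Real.pi * x i := by
  have h : ∀ i, ∃ m : ℤ, x i + m = (Quotient.out (x i : UnitAddCircle) : ℝ) := by
    intro i
    have h1 : ((Quotient.out (x i : UnitAddCircle) : ℝ) : UnitAddCircle) = (x i : UnitAddCircle) :=
      QuotientAddGroup.out_eq' _
    obtain ⟨m, hm⟩ := (AddCircle.coe_eq_zero_iff (1 : ℝ)
      (x := (Quotient.out (x i : UnitAddCircle) : ℝ) - x i)).1 (by
        rw [AddCircle.coe_sub, h1, sub_self])
    refine ⟨m, ?_⟩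
    simp at hm
    linarith
  choose m hm using h
  rw [← hu _ m]
  unfold torusFn
  congr 1
  ext i
  rw [← hm i]
  simp
  ring

lemma continuous_torusFn {n : ℕ} {E : Type*} [TopologicalSpace E] {u : (Fin n → ℝ) → E}
    (hu : TwoPiPeriodic u) (hc : Continuous u) : Continuous (torusFn u) := by
  have hq : IsOpenQuotientMap
      (Pi.map fun (_ : Fin n) (x : ℝ) => (x : UnitAddCircle)) :=
    IsOpenQuotientMap.piMap fun _ => QuotientAddGroup.isOpenQuotientMap_mk
  rw [hq.isQuotientMap.continuous_iff]
  have : torusFn u ∘ (Pi.map fun (_ : Fin n) (x : ℝ) => (x : UnitAddCircle)) =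
      fun x => u fun i => 2 * Real.pi * x i := by
    ext x
    exact torusFn_coe hu x
  rw [this]
  fun_prop

/-- The cube `[-π, π]ⁿ`. -/
abbrev cube (n : ℕ) : Set (Fin n → ℝ) :=
  Set.Icc (fun _ => -Real.pi : Fin n → ℝ) (fun _ => Real.pi)

section Integration

variable {n : ℕ} {E : Type*} [NormedAddCommGroup E] [NormedSpace ℝ E]

open scoped Pointwise in
/-- The rescaling `x ↦ 2πx` turns the mean over a box of side `2π` into an integral over a
fundamental domain of `ℤⁿ`, in the form used for integrals over `UnitAddTorus`. -/
lemma integral_box_eq (u : (Fin n → ℝ) → E) (a : Fin n → ℝ) :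
    ((2 * Real.pi) ^ n : ℝ)⁻¹ • ∫ x in Set.Icc a (fun i => a i + 2 * Real.pi), u x =
      ∫ x in {x : Fin n → ℝ | ∀ i, x i ∈ Set.Ioc (a i / (2 * Real.pi)) (a i / (2 * Real.pi) + 1)},
        u fun i => 2 * Real.pi * x i := by
  have hp : 0 < 2 * Real.pi := Real.two_pi_pos
  have h := Measure.setIntegral_comp_smul_of_pos (volume : Measure (Fin n → ℝ)) u
    {x : Fin n → ℝ | ∀ i, x i ∈ Set.Ioc (a i / (2 * Real.pi)) (a i / (2 * Real.pi) + 1)} hp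
  have hs : (2 * Real.pi) • {x : Fin n → ℝ | ∀ i, x i ∈
      Set.Ioc (a i / (2 * Real.pi)) (a i / (2 * Real.pi) + 1)} =
      Set.univ.pi fun i => Set.Ioc (a i) (a i + 2 * Real.pi) := by
    ext x
    rw [Set.mem_smul_set_iff_inv_smul_mem₀ hp.ne']
    simp only [Set.mem_ofPred_eq, Set.mem_univ_pi, Pi.smul_apply, smul_eq_mul, Set.mem_Ioc]
    refine forall_congr' fun i => ?_
    rw [div_lt_iff₀ hp, inv_mul_le_iff₀ hp]
    field_simp
  have hae : ∫ x in Set.univ.pi fun i => Set.Ioc (a i) (a i + 2 * Real.pi), u x =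
      ∫ x in Set.Icc a (fun i => a i + 2 * Real.pi), u x :=
    setIntegral_congr_set Measure.univ_pi_Ioc_ae_eq_Icc
  rw [hs, hae] at h
  rw [Module.finrank_fin_fun] at h
  exact h.symm

/-- Both sides equal, up to normalization, the integral of `torusFn u` over the torus. -/
lemma integral_box_indep {u : (Fin n → ℝ) → E} (hu : TwoPiPeriodic u) (a b : Fin n → ℝ) :
    ∫ x in Set.Icc a (fun i => a i + 2 * Real.pi), u x =
      ∫ x in Set.Icc b (fun i => b i + 2 * Real.pi), u x := by
  have hp : ((2 * Real.pi) ^ n : ℝ)⁻¹ ≠ 0 := by positivity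
  apply smul_right_injective E hp
  simp only
  rw [integral_box_eq, integral_box_eq]
  simp_rw [← torusFn_coe hu]
  rw [← UnitAddTorus.integral_preimage, ← UnitAddTorus.integral_preimage]

lemma cube_eq_box : cube n = Set.Icc (fun _ => -Real.pi : Fin n → ℝ)
    (fun i => (fun _ => -Real.pi : Fin n → ℝ) i + 2 * Real.pi) := by
  have h : (fun _ => Real.pi : Fin n → ℝ) = fun _ => -Real.pi + 2 * Real.pi := by
    ext i
    ring
  rw [cube, h]

lemma integral_cube_add {u : (Fin n → ℝ) → E} (hu : TwoPiPeriodic u) (w : Fin n → ℝ) :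
    ∫ x in cube n, u (x + w) = ∫ x in cube n, u x := by
  have h := (measurePreserving_add_right (volume : Measure (Fin n → ℝ)) w).setIntegral_preimage_emb
    (measurableEmbedding_addRight w) u
    (Set.Icc (fun i => -Real.pi + w i) (fun i => (-Real.pi + w i) + 2 * Real.pi))
  have hs : (fun x => x + w) ⁻¹'
      (Set.Icc (fun i => -Real.pi + w i) (fun i => (-Real.pi + w i) + 2 * Real.pi)) = cube n := by
    ext x
    simp only [Set.mem_preimage, Set.mem_Icc, Pi.le_def, Pi.add_apply]
    refine and_congr (forall_congr' fun i => ?_) (forall_congr' fun i => ?_)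
    · constructor <;> intro h <;> linarith
    · constructor <;> intro h <;> linarith
  rw [hs] at h
  rw [h, cube_eq_box]
  exact integral_box_indep hu _ _

/-- Differentiation under the integral sign over the cube, with the derivative jointly
continuous, so that it is bounded near any parameter value by compactness. -/
lemma hasDerivAt_integral_cube {u u' : ℝ → (Fin n → ℝ) → E} {O : Set ℝ} (hO : IsOpen O)
    (hu' : ContinuousOn (Function.uncurry u') (O ×ˢ Set.univ))
    (hd : ∀ t ∈ O, ∀ β, HasDerivAt (fun τ => u τ β) (u' t β) t)
    (hc : ∀ t ∈ O, Continuous (u t)) {t₀ : ℝ} (ht₀ : t₀ ∈ O) :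
    HasDerivAt (fun t => ∫ β in cube n, u t β) (∫ β in cube n, u' t₀ β) t₀ := by
  obtain ⟨K, hK, hKO, hKc⟩ := local_compact_nhds (hO.mem_nhds ht₀)
  have hQ : IsCompact (cube n) := isCompact_Icc
  obtain ⟨B, hB⟩ := (hKc.prod hQ).exists_bound_of_continuousOn
    (hu'.mono (Set.prod_mono hKO (Set.subset_univ _)))
  have hu't : Continuous (u' t₀) := by
    have : ContinuousOn (fun β => Function.uncurry u' (t₀, β)) Set.univ :=
      hu'.comp (by fun_prop) fun β _ => ⟨ht₀, Set.mem_univ _⟩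
    exact continuousOn_univ.1 this
  refine (hasDerivAt_integral_of_dominated_loc_of_deriv_le (bound := fun _ => B) (s := K) hK
    ?_ ?_ ?_ ?_ ?_ ?_).2
  · filter_upwards [hO.mem_nhds ht₀] with t ht using (hc t ht).aestronglyMeasurable
  · exact (hc t₀ ht₀).continuousOn.integrableOn_compact hQ
  · exact hu't.aestronglyMeasurable
  · exact (ae_restrict_iff' measurableSet_Icc).2
      (Eventually.of_forall fun β hβ t ht => hB (t, β) ⟨ht, hβ⟩)
  · exact integrableOn_const hQ.measure_ne_top
  · exact Eventually.of_forall fun β t ht => hd t (hKO ht) β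

/-- A directional derivative of a periodic function has mean zero: the integral over a period
cell does not change under translations, so its derivative along translations vanishes. -/
lemma integral_cube_fderiv {g : (Fin n → ℝ) → E} (hg : ContDiff ℝ 1 g) (hper : TwoPiPeriodic g)
    (v : Fin n → ℝ) : ∫ β in cube n, fderiv ℝ g β v = 0 := by
  have hf : Continuous (fderiv ℝ g) := hg.continuous_fderiv one_ne_zero
  have h := hasDerivAt_integral_cube (n := n) (u := fun t β => g (β + t • v))
    (u' := fun t β => fderiv ℝ g (β + t • v) v) isOpen_univ (by fun_prop)
    (fun t _ β => by
      have h1 : HasDerivAt (fun τ : ℝ => β + τ • v) v t := by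
        simpa using ((hasDerivAt_id t).smul_const v).const_add β
      exact ((hg.differentiable one_ne_zero) _).hasFDerivAt.comp_hasDerivAt t h1)
    (fun t _ => by have := hg.continuous; fun_prop) (Set.mem_univ 0)
  have h2 : (fun t : ℝ => ∫ β in cube n, g (β + t • v)) = fun _ => ∫ β in cube n, g β :=
    funext fun t => integral_cube_add hper _
  rw [h2] at h
  simpa using h.unique (hasDerivAt_const _ _)

end Integration

/-! ### Characters and the decay of Fourier coefficients -/

/-- The character `k ↦ e^{i k·γ}` of `ℂⁿ`. -/
def charC {n : ℕ} (γ : Fin n → ℤ) (k : Fin n → ℂ) : ℂ :=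
  Complex.exp (Complex.I * ∑ i, k i * (γ i : ℂ))

/-- The inclusion `ℝⁿ → ℂⁿ` as a real-linear map. -/
def realIncl (n : ℕ) : (Fin n → ℝ) →L[ℝ] (Fin n → ℂ) :=
  ContinuousLinearMap.pi fun i => Complex.ofRealCLM.comp (ContinuousLinearMap.proj i)

/-- The point `β + iα` of `ℂⁿ` with real part `β` and imaginary part `α`. -/
def cpt {n : ℕ} (β α : Fin n → ℝ) : Fin n → ℂ := fun i => (β i : ℂ) + (α i : ℂ) * Complex.I

section Basics

variable {n : ℕ}

@[simp] lemma realIncl_apply (x : Fin n → ℝ) (i : Fin n) : realIncl n x i = (x i : ℂ) := rfl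

lemma norm_realIncl_le : ‖realIncl n‖ ≤ 1 := by
  refine ContinuousLinearMap.opNorm_le_bound _ zero_le_one fun x => ?_
  rw [one_mul, pi_norm_le_iff_of_nonneg (norm_nonneg _)]
  intro i
  simpa using norm_le_pi_norm x i

lemma cpt_eq (β α : Fin n → ℝ) : cpt β α = realIncl n β + Complex.I • realIncl n α := by
  ext i
  simp [cpt, mul_comm]

@[simp] lemma cpt_mem {β α : Fin n → ℝ} {G : Set (Fin n → ℝ)} :
    (cpt β α ∈ tubeOver G) ↔ α ∈ G := by
  simp [cpt, tubeOver]

lemma cpt_re_im (k : Fin n → ℂ) : cpt (fun i => (k i).re) (fun i => (k i).im) = k := by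
  ext i
  simp [cpt]

lemma continuous_cpt : Continuous fun p : (Fin n → ℝ) × (Fin n → ℝ) => cpt p.1 p.2 := by
  unfold cpt
  fun_prop

lemma contDiff_charC (γ : Fin n → ℤ) {m : WithTop ℕ∞} : ContDiff ℂ m (charC γ) := by
  unfold charC
  fun_prop

lemma contDiff_real_charC (γ : Fin n → ℤ) {m : WithTop ℕ∞} : ContDiff ℝ m (charC γ) :=
  (contDiff_charC γ).restrict_scalars ℝ

lemma charC_add (γ : Fin n → ℤ) (k l : Fin n → ℂ) : charC γ (k + l) = charC γ k * charC γ l := by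
  simp only [charC, Pi.add_apply, ← Complex.exp_add, add_mul, Finset.sum_add_distrib, mul_add]

lemma charC_period (γ m : Fin n → ℤ) :
    charC γ (fun i => ((2 * Real.pi * m i : ℝ) : ℂ)) = 1 := by
  rw [charC, Complex.exp_eq_one_iff]
  refine ⟨∑ i, m i * γ i, ?_⟩
  push_cast
  rw [Finset.sum_mul, Finset.mul_sum]
  exact Finset.sum_congr rfl fun i _ => by ring

lemma norm_charC (γ : Fin n → ℤ) (β α : Fin n → ℝ) :
    ‖charC γ (cpt β α)‖ = Real.exp (-∑ i, α i * γ i) := by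
  rw [charC, Complex.norm_exp]
  congr 1
  simp [cpt, Complex.re_sum, Complex.im_sum]

lemma charC_cpt (γ : Fin n → ℤ) (β α : Fin n → ℝ) :
    charC γ (cpt β α) = (Real.exp (-∑ i, α i * γ i) : ℂ) * charC γ (realIncl n β) := by
  rw [cpt_eq, charC_add, mul_comm]
  congr 1
  rw [charC, Complex.ofReal_exp]
  congr 1
  simp only [Pi.smul_apply, realIncl_apply, smul_eq_mul]
  push_cast
  rw [Finset.mul_sum, ← Finset.sum_neg_distrib]
  refine Finset.sum_congr rfl fun i _ => ?_
  linear_combination (α i : ℂ) * γ i * Complex.I_mul_I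

lemma hasDerivAt_charC_real (γ : Fin n → ℤ) (β : Fin n → ℝ) (j : Fin n) :
    HasDerivAt (fun t : ℝ => charC γ (realIncl n (β + t • Pi.single j 1)))
      (Complex.I * γ j * charC γ (realIncl n β)) 0 := by
  have h1 : ∀ t : ℝ, charC γ (realIncl n (β + t • Pi.single j 1)) =
      charC γ (realIncl n β) * Complex.exp (t * (Complex.I * γ j)) := by
    intro t
    rw [map_add, charC_add]
    congr 1
    rw [charC, Finset.sum_eq_single j]
    · simp
      ring_nf
    · intro b _ hb
      simp [hb]
    · simp
  simp_rw [h1]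
  have h2 : HasDerivAt (fun t : ℝ => (t : ℂ) * (Complex.I * γ j)) (Complex.I * γ j) 0 := by
    simpa using (Complex.ofRealCLM.hasDerivAt (x := (0 : ℝ))).mul_const (Complex.I * (γ j : ℂ))
  have h3 := (h2.cexp).const_mul (charC γ (realIncl n β))
  refine h3.congr_deriv ?_
  simp
  ring

lemma fderiv_charC_real (γ : Fin n → ℤ) (β : Fin n → ℝ) (j : Fin n) :
    fderiv ℝ (fun x => charC γ (realIncl n x)) β (Pi.single j 1) =
      Complex.I * γ j * charC γ (realIncl n β) := by
  have hd : DifferentiableAt ℝ (fun x => charC γ (realIncl n x)) β :=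
    (((contDiff_real_charC γ (m := 1)).comp (realIncl n).contDiff).differentiable one_ne_zero) β
  rw [← hd.lineDeriv_eq_fderiv]
  exact (hasDerivAt_charC_real γ β j).deriv

end Basics

section Decay

variable {n : ℕ} {E : Type*} [NormedAddCommGroup E] [NormedSpace ℂ E]

lemma twoPiPeriodic_charC_smul {g : (Fin n → ℝ) → E} (hg : TwoPiPeriodic g) (γ : Fin n → ℤ) :
    TwoPiPeriodic fun x => charC γ (realIncl n x) • g x := by
  intro x m
  beta_reduce
  rw [hg x m, map_add, charC_add]
  have : realIncl n (fun i => 2 * Real.pi * m i) = fun i => ((2 * Real.pi * m i : ℝ) : ℂ) := rfl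
  rw [this, charC_period, mul_one]

/-- Integration by parts: the derivative of `e^{iβ·γ} g(β)` has mean zero. -/
lemma integral_charC_fderiv {g : (Fin n → ℝ) → E} (hg : ContDiff ℝ 1 g) (hper : TwoPiPeriodic g)
    (γ : Fin n → ℤ) (j : Fin n) :
    ∫ β in cube n, charC γ (realIncl n β) • fderiv ℝ g β (Pi.single j 1) =
      -((Complex.I * γ j) • ∫ β in cube n, charC γ (realIncl n β) • g β) := by
  have hch : ContDiff ℝ 1 fun x => charC γ (realIncl n x) :=
    (contDiff_real_charC γ).comp (realIncl n).contDiff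
  have h := integral_cube_fderiv (hch.smul hg) (twoPiPeriodic_charC_smul hper γ) (Pi.single j 1)
  have hd : ∀ β, fderiv ℝ ((fun x => charC γ (realIncl n x)) • g) β (Pi.single j 1) =
      charC γ (realIncl n β) • fderiv ℝ g β (Pi.single j 1) +
        (Complex.I * γ j) • charC γ (realIncl n β) • g β := by
    intro β
    rw [fderiv_smul (hch.differentiable one_ne_zero β) (hg.differentiable one_ne_zero β)]
    simp [fderiv_charC_real, mul_smul]
  simp_rw [hd] at h
  have hg' : Continuous (fderiv ℝ g) := hg.continuous_fderiv one_ne_zero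
  have hcc := hch.continuous
  have hgc := hg.continuous
  rw [integral_add, integral_smul] at h
  · exact eq_neg_of_add_eq_zero_left h
  · exact Continuous.integrableOn_Icc (by fun_prop)
  · exact Continuous.integrableOn_Icc (by fun_prop)

lemma norm_charC_real (γ : Fin n → ℤ) (β : Fin n → ℝ) : ‖charC γ (realIncl n β)‖ = 1 := by
  have h := norm_charC γ β 0
  rw [cpt_eq] at h
  simpa using h

/-- Integrating by parts `m` times in the `j`-th variable gains a factor `|γ_j|⁻ᵐ`. -/
lemma pow_mul_norm_integral_le (m : ℕ) {g : (Fin n → ℝ) → E} (hg : ContDiff ℝ m g)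
    (hper : TwoPiPeriodic g) {C : ℝ} (hC : ∀ β, ‖iteratedFDeriv ℝ m g β‖ ≤ C)
    (γ : Fin n → ℤ) (j : Fin n) :
    |(γ j : ℝ)| ^ m * ‖∫ β in cube n, charC γ (realIncl n β) • g β‖ ≤
      C * volume.real (cube n) := by
  induction m generalizing g with
  | zero =>
    rw [pow_zero, one_mul]
    refine norm_setIntegral_le_of_norm_le_const (isCompact_Icc.measure_lt_top) fun β _ => ?_
    rw [norm_smul, norm_charC_real, one_mul]
    simpa using hC β
  | succ m ih =>
    have hg1 : ContDiff ℝ 1 g := hg.of_le (by exact_mod_cast Nat.le_add_left 1 m)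
    have hdg : ContDiff ℝ m (fderiv ℝ g) := hg.fderiv_right (by exact_mod_cast le_refl (m + 1))
    have h := ih (g := fun β => fderiv ℝ g β (Pi.single j 1)) (hdg.clm_apply contDiff_const)
      (by
        intro x k
        simp only
        congr 1
        rw [← fderiv_comp_add_right]
        congr 1
        ext y
        exact hper y k)
      (fun β => by
        refine (norm_iteratedFDeriv_clm_apply_const hdg.contDiffAt le_rfl).trans ?_
        rw [norm_iteratedFDeriv_fderiv]
        simpa [Pi.norm_single] using hC β)
    rw [integral_charC_fderiv hg1 hper, norm_neg, norm_smul, norm_mul, Complex.norm_I, one_mul,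
      Complex.norm_intCast] at h
    rw [pow_succ, mul_assoc]
    exact h

end Decay

/-! ### Slices of the tube -/

section Tube

variable {n : ℕ} {E : Type*} [NormedAddCommGroup E] [NormedSpace ℂ E] {G : Set (Fin n → ℝ)}

/-- The imaginary part `ℂⁿ → ℝⁿ` as a real-linear map. -/
def imPart (n : ℕ) : (Fin n → ℂ) →L[ℝ] (Fin n → ℝ) :=
  ContinuousLinearMap.pi fun i => Complex.imCLM.comp (ContinuousLinearMap.proj i)

lemma isOpen_tubeOver (hG : IsOpen G) : IsOpen (tubeOver G) :=
  hG.preimage (imPart n).continuous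

lemma tubeOver_mono {G' : Set (Fin n → ℝ)} (h : G ⊆ G') : tubeOver G ⊆ tubeOver G' :=
  fun _ hk => h hk

lemma slice_eq {F : Type*} (s : (Fin n → ℂ) → F) (α : Fin n → ℝ) :
    (fun β => s (cpt β α)) =
      (fun z => s (z + Complex.I • realIncl n α)) ∘ realIncl n := by
  ext β
  simp [cpt_eq]

lemma contDiff_slice {m : WithTop ℕ∞} {s : (Fin n → ℂ) → E} (hs : ContDiffOn ℝ m s (tubeOver G))
    {α : Fin n → ℝ} (hα : α ∈ G) : ContDiff ℝ m fun β => s (cpt β α) := by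
  have h : ContDiff ℝ m fun β => cpt β α := by
    simp_rw [cpt_eq]
    exact (realIncl n).contDiff.add contDiff_const
  rw [← contDiffOn_univ]
  exact hs.comp h.contDiffOn fun β _ => cpt_mem.2 hα

lemma periodic_slice {F : Type*} {s : (Fin n → ℂ) → F}
    (hper : ∀ k ∈ tubeOver G, ∀ γ : Fin n → ℤ,
      s (k + fun i => ((2 * Real.pi * γ i : ℝ) : ℂ)) = s k)
    {α : Fin n → ℝ} (hα : α ∈ G) : TwoPiPeriodic fun β => s (cpt β α) := by
  intro x m
  beta_reduce
  rw [← hper (cpt x α) (cpt_mem.2 hα) m]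
  congr 1
  ext i
  simp [cpt]
  ring

open scoped Pointwise in
/-- A bound on the derivatives of `s` within the tube, which include derivatives transversal to the
slice, bounds those of each slice: the slice is `s`, translated, composed with `realIncl`. -/
lemma norm_iteratedFDeriv_slice_le (hG : Convex ℝ G) (hi : (interior G).Nonempty) {m : ℕ}
    {s : (Fin n → ℂ) → E} (hs : ContDiffOn ℝ m s (tubeOver G)) {C : ℝ}
    (hC : ∀ k ∈ tubeOver G, ‖iteratedFDerivWithin ℝ m s (tubeOver G) k‖ ≤ C)
    {α : Fin n → ℝ} (hα : α ∈ G) (β : Fin n → ℝ) :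
    ‖iteratedFDeriv ℝ m (fun β => s (cpt β α)) β‖ ≤ C := by
  set c : Fin n → ℂ := Complex.I • realIncl n α with hc
  set T : Set (Fin n → ℂ) := (fun z => z + c) ⁻¹' tubeOver G with hT
  have hTv : c +ᵥ T = tubeOver G := by
    ext z
    rw [Set.mem_vadd_set_iff_neg_vadd_mem]
    simp [hT]
  have hTU : UniqueDiffOn ℝ T := by
    refine uniqueDiffOn_convex
      ((hG.linear_preimage (imPart n).toLinearMap).translate_preimage_left c) ?_
    obtain ⟨α', hα'⟩ := hi
    refine ⟨cpt 0 (α' - α), interior_maximal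
      (Set.preimage_mono (tubeOver_mono interior_subset) :
        (fun z => z + c) ⁻¹' tubeOver (interior G) ⊆ T)
      ((isOpen_tubeOver isOpen_interior).preimage (by fun_prop)) ?_⟩
    have : cpt 0 (α' - α) + c = cpt 0 α' := by
      simp [cpt_eq, hc, smul_sub]
    rw [Set.mem_preimage, this]
    exact cpt_mem.2 hα'
  have hpre : realIncl n ⁻¹' T = Set.univ := by
    ext x
    simp only [hT, hc, Set.mem_preimage, ← cpt_eq, cpt_mem, hα, Set.mem_univ]
  have hsT : ContDiffOn ℝ m (fun z => s (z + c)) T :=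
    hs.comp (contDiff_id.add contDiff_const).contDiffOn fun _ hz => hz
  have hmem : realIncl n β ∈ T := by
    have : β ∈ realIncl n ⁻¹' T := hpre ▸ Set.mem_univ β
    exact this
  have h := (realIncl n).iteratedFDerivWithin_comp_right hsT hTU
    (by rw [hpre]; exact uniqueDiffOn_univ) hmem (i := m) le_rfl
  rw [hpre, iteratedFDerivWithin_univ, iteratedFDerivWithin_comp_add_right, hTv] at h
  rw [slice_eq, h]
  refine (ContinuousMultilinearMap.norm_compContinuousLinearMap_le _ _).trans ?_
  refine (mul_le_of_le_one_right (norm_nonneg _) ?_).trans (hC _ hmem)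
  exact Finset.prod_le_one (fun _ _ => norm_nonneg _) fun _ _ => norm_realIncl_le

lemma hasDerivAt_cpt_segment (β α v : Fin n → ℝ) (t : ℝ) :
    HasDerivAt (fun τ : ℝ => cpt β (α + τ • v)) (Complex.I • realIncl n v) t := by
  simp_rw [cpt_eq, map_add, map_smul, smul_add]
  have h : HasDerivAt (fun τ : ℝ => τ • (Complex.I • realIncl n v))
      (Complex.I • realIncl n v) t := by
    simpa using (hasDerivAt_id t).smul_const (Complex.I • realIncl n v)
  simpa [smul_comm Complex.I] using (h.const_add (Complex.I • realIncl n α)).const_add (realIncl n β)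

/-- The mean of a periodic holomorphic function over the slice of the tube at height `α` does not
depend on `α`. Moving `α` in the direction `v` differentiates the function in the direction `iv`,
which by holomorphy is `i` times the derivative in the real direction `v`, and the latter has mean
zero. Heights in `G` are joined to an interior one by a segment which lies in the interior up to
its endpoint, where continuity suffices. -/
lemma integral_slice_eq (hG : Convex ℝ G) {F : (Fin n → ℂ) → E}
    (hF : ContDiffOn ℝ 1 F (tubeOver G)) (hhol : DifferentiableOn ℂ F (tubeOver (interior G)))
    (hper : ∀ k ∈ tubeOver G, ∀ γ : Fin n → ℤ,
      F (k + fun i => ((2 * Real.pi * γ i : ℝ) : ℂ)) = F k)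
    {α₀ α : Fin n → ℝ} (hα₀ : α₀ ∈ interior G) (hα : α ∈ G) :
    ∫ β in cube n, F (cpt β α) = ∫ β in cube n, F (cpt β α₀) := by
  set v := α - α₀ with hv
  have hopen : IsOpen (tubeOver (interior G)) := isOpen_tubeOver isOpen_interior
  have hFi : ContDiffOn ℝ 1 F (tubeOver (interior G)) := hF.mono (tubeOver_mono interior_subset)
  have hfd : ContinuousOn (fderiv ℝ F) (tubeOver (interior G)) :=
    hFi.continuousOn_fderiv_of_isOpen hopen le_rfl
  set O : Set ℝ := (fun t : ℝ => α₀ + t • v) ⁻¹' interior G with hO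
  have hOo : IsOpen O := isOpen_interior.preimage (by fun_prop)
  have hIco : Set.Ico (0 : ℝ) 1 ⊆ O := by
    intro t ht
    have := hG.combo_interior_self_mem_interior hα₀ hα (sub_pos.2 ht.2) ht.1 (sub_add_cancel 1 t)
    have he : α₀ + t • v = (1 - t) • α₀ + t • α := by rw [hv]; module
    rw [hO, Set.mem_preimage, he]
    exact this
  have hIcc : ∀ t ∈ Set.Icc (0 : ℝ) 1, α₀ + t • v ∈ G := by
    intro t ht
    have := hG (interior_subset hα₀) hα (sub_nonneg.2 ht.2) ht.1 (sub_add_cancel 1 t)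
    have he : α₀ + t • v = (1 - t) • α₀ + t • α := by rw [hv]; module
    rw [he]
    exact this
  have hcv : Continuous fun p : ℝ × (Fin n → ℝ) => cpt p.2 (α₀ + p.1 • v) :=
    continuous_cpt.comp (by fun_prop : Continuous fun p : ℝ × (Fin n → ℝ) => (p.2, α₀ + p.1 • v))
  have hderiv : ∀ t ∈ O, HasDerivAt (fun t : ℝ => ∫ β in cube n, F (cpt β (α₀ + t • v))) 0 t := by
    intro t ht
    have h := hasDerivAt_integral_cube (n := n) (u := fun t β => F (cpt β (α₀ + t • v)))
      (u' := fun t β => fderiv ℝ F (cpt β (α₀ + t • v)) (Complex.I • realIncl n v)) hOo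
      (by
        have h1 : ContinuousOn (fun p : ℝ × (Fin n → ℝ) => fderiv ℝ F (cpt p.2 (α₀ + p.1 • v)))
            (O ×ˢ Set.univ) := hfd.comp hcv.continuousOn fun p hp => cpt_mem.2 hp.1
        exact h1.clm_apply continuousOn_const)
      (fun τ hτ β => by
        have hd : DifferentiableAt ℝ F (cpt β (α₀ + τ • v)) :=
          (hFi.differentiableOn one_ne_zero).differentiableAt (hopen.mem_nhds (cpt_mem.2 hτ))
        exact hd.hasFDerivAt.comp_hasDerivAt τ (hasDerivAt_cpt_segment β α₀ v τ))
      (fun τ hτ => (contDiff_slice hFi hτ).continuous) ht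
    have hzero : ∫ β in cube n, fderiv ℝ F (cpt β (α₀ + t • v)) (Complex.I • realIncl n v) = 0 := by
      have hslice := integral_cube_fderiv (contDiff_slice hFi ht)
        (periodic_slice hper (interior_subset ht)) v
      have hpt : ∀ β, fderiv ℝ F (cpt β (α₀ + t • v)) (Complex.I • realIncl n v) =
          Complex.I • fderiv ℝ (fun β => F (cpt β (α₀ + t • v))) β v := by
        intro β
        have hdC : DifferentiableAt ℂ F (cpt β (α₀ + t • v)) :=
          hhol.differentiableAt (hopen.mem_nhds (cpt_mem.2 ht))
        have hc : HasFDerivAt (fun β => cpt β (α₀ + t • v)) (realIncl n) β := by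
          simp_rw [cpt_eq]
          exact (realIncl n).hasFDerivAt.add_const _
        have hcomp := (hdC.restrictScalars ℝ).hasFDerivAt.comp β hc
        have hval : fderiv ℝ (fun β => F (cpt β (α₀ + t • v))) β v =
            fderiv ℝ F (cpt β (α₀ + t • v)) (realIncl n v) := by
          have := hcomp.fderiv
          exact congrArg (fun L => L v) this
        rw [hval, hdC.fderiv_restrictScalars ℝ]
        simp
      simp_rw [hpt]
      rw [integral_smul, hslice, smul_zero]
    rw [hzero] at h
    exact h
  have hcont : ContinuousOn (fun t : ℝ => ∫ β in cube n, F (cpt β (α₀ + t • v)))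
      (Set.Icc 0 1) := by
    rw [continuousOn_iff_continuous_domRestrict]
    have hc : Continuous (Function.uncurry fun (t : Set.Icc (0 : ℝ) 1) (β : Fin n → ℝ) =>
        F (cpt β (α₀ + (t : ℝ) • v))) := by
      rw [← continuousOn_univ]
      exact hF.continuousOn.comp
        (hcv.comp (by fun_prop : Continuous fun p : Set.Icc (0 : ℝ) 1 × (Fin n → ℝ) =>
          ((p.1 : ℝ), p.2))).continuousOn fun p _ => cpt_mem.2 (hIcc _ p.1.2)
    exact continuous_parametric_integral_of_continuous hc isCompact_Icc
  have h := constant_of_has_deriv_right_zero hcont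
    (fun t ht => (hderiv t (hIco ht)).hasDerivWithinAt) 1 (Set.right_mem_Icc.2 zero_le_one)
  simpa [hv] using h

end Tube

/-! ### Sums over the lattice -/

section Lattice

variable {n : ℕ}

lemma enormZ_nonneg (γ : Fin n → ℤ) : 0 ≤ enormZ γ := Real.sqrt_nonneg _

lemma abs_le_enormZ (γ : Fin n → ℤ) (i : Fin n) : |(γ i : ℝ)| ≤ enormZ γ := by
  refine Real.abs_le_sqrt ?_
  exact Finset.single_le_sum (f := fun i => (γ i : ℝ) ^ 2) (fun i _ => sq_nonneg _)
    (Finset.mem_univ i)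

lemma one_add_enormZ_le {γ : Fin n → ℤ} (hγ : γ ≠ 0) :
    ∃ j, 1 + enormZ γ ≤ (1 + n) * |(γ j : ℝ)| := by
  obtain ⟨i, hi⟩ := Function.ne_iff.1 hγ
  obtain ⟨j, -, hj⟩ := Finset.exists_max_image Finset.univ (fun i => |(γ i : ℝ)|)
    ⟨i, Finset.mem_univ i⟩
  refine ⟨j, ?_⟩
  have h1 : 1 ≤ |(γ j : ℝ)| := by
    refine le_trans ?_ (hj i (Finset.mem_univ i))
    exact_mod_cast Int.one_le_abs hi
  have h2 : enormZ γ ≤ n * |(γ j : ℝ)| := by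
    refine Real.sqrt_le_iff.2 ⟨by positivity, ?_⟩
    have h3 : ∑ i, (γ i : ℝ) ^ 2 ≤ n * |(γ j : ℝ)| ^ 2 := by
      have := Finset.sum_le_card_nsmul Finset.univ (fun i => (γ i : ℝ) ^ 2) (|(γ j : ℝ)| ^ 2)
        fun i hi => by
          rw [← sq_abs]
          exact pow_le_pow_left₀ (abs_nonneg _) (hj i hi) 2
      simpa using this
    have hn : (1 : ℝ) ≤ n := by exact_mod_cast Fin.pos i
    nlinarith [sq_nonneg (γ j : ℝ), sq_abs (γ j : ℝ)]
  linarith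

/-- The function is dominated by `∏ᵢ (1 + γᵢ²)⁻¹`, a product of summable functions of one variable each. -/
lemma summable_one_add_enormZ_rpow :
    Summable fun γ : Fin n → ℤ => (1 + enormZ γ) ^ (-(2 * (n : ℝ) + 1)) := by
  have h1 : Summable fun m : ℤ => (1 + (m : ℝ) ^ 2)⁻¹ := by
    refine Summable.of_norm_bounded_eventually (Real.summable_one_div_int_pow.2 one_lt_two) ?_
    rw [Filter.eventually_cofinite]
    refine (Set.finite_singleton (0 : ℤ)).subset fun m hm => ?_
    by_contra h0
    apply hm
    have hm0 : (0 : ℝ) < (m : ℝ) ^ 2 := by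
      have : (m : ℝ) ≠ 0 := by exact_mod_cast h0
      positivity
    rw [Real.norm_of_nonneg (by positivity), one_div]
    exact inv_anti₀ hm0 (by linarith)
  have h2 : Summable fun γ : Fin n → ℤ => ∏ i, (1 + (γ i : ℝ) ^ 2)⁻¹ := by
    refine summable_of_sum_le (fun γ => Finset.prod_nonneg fun i _ => by positivity)
      (c := ∏ _i : Fin n, ∑' m : ℤ, (1 + (m : ℝ) ^ 2)⁻¹) fun S => ?_
    classical
    calc ∑ γ ∈ S, ∏ i, (1 + (γ i : ℝ) ^ 2)⁻¹
        ≤ ∑ γ ∈ Fintype.piFinset fun i => (S.image fun γ => γ i : Finset ℤ),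
            ∏ i, (1 + (γ i : ℝ) ^ 2)⁻¹ := by
          refine Finset.sum_le_sum_of_subset_of_nonneg (fun γ hγ => ?_)
            fun γ _ _ => Finset.prod_nonneg fun i _ => by positivity
          exact Fintype.mem_piFinset.2 fun i => Finset.mem_image_of_mem _ hγ
      _ = ∏ i, ∑ m ∈ (S.image fun γ => γ i : Finset ℤ), (1 + (m : ℝ) ^ 2)⁻¹ :=
          (Finset.prod_univ_sum _ fun _ (m : ℤ) => (1 + (m : ℝ) ^ 2)⁻¹).symm
      _ ≤ _ := Finset.prod_le_prod (fun i _ => Finset.sum_nonneg fun m _ => by positivity)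
          fun i _ => h1.sum_le_tsum _ fun m _ => by positivity
  refine h2.of_nonneg_of_le (fun γ => Real.rpow_nonneg (by linarith [enormZ_nonneg γ]) _)
    fun γ => ?_
  have he := enormZ_nonneg γ
  rw [Real.rpow_neg (by linarith), Finset.prod_inv_distrib]
  refine inv_anti₀ (Finset.prod_pos fun i _ => by positivity) ?_
  calc ∏ i, (1 + (γ i : ℝ) ^ 2) ≤ ∏ _i : Fin n, (1 + enormZ γ) ^ 2 := by
        refine Finset.prod_le_prod (fun i _ => by positivity) fun i _ => ?_
        have := pow_le_pow_left₀ (abs_nonneg _) (abs_le_enormZ γ i) 2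
        rw [sq_abs] at this
        nlinarith
    _ = (1 + enormZ γ) ^ (2 * (n : ℝ)) := by
        rw [Finset.prod_const, Finset.card_univ, Fintype.card_fin, ← pow_mul, ← Real.rpow_natCast]
        push_cast
        rfl
    _ ≤ _ := Real.rpow_le_rpow_of_exponent_le (by linarith) (by linarith)

end Lattice

/-! ### Fourier inversion -/

section Inversion

variable {n : ℕ} {E : Type*} [NormedAddCommGroup E] [NormedSpace ℂ E]

/-- The Fourier coefficient `(2π)⁻ⁿ ∫_{[-π,π]ⁿ} e^{iβ·γ} g(β) dβ` of a function on `ℝⁿ`. The sign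
in the exponent is opposite to that of `UnitAddTorus.mFourierCoeff`. -/
def cubeCoeff (g : (Fin n → ℝ) → E) (γ : Fin n → ℤ) : E :=
  ((2 * Real.pi) ^ n : ℝ)⁻¹ • ∫ β in cube n, charC γ (realIncl n β) • g β

lemma mFourier_coe (γ : Fin n → ℤ) (x : Fin n → ℝ) :
    UnitAddTorus.mFourier γ (fun i => (x i : UnitAddCircle)) =
      charC γ (realIncl n fun i => 2 * Real.pi * x i) := by
  rw [charC, Finset.mul_sum, Complex.exp_sum]
  change ∏ i, fourier (γ i) (x i : UnitAddCircle) = _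
  refine Finset.prod_congr rfl fun i _ => ?_
  rw [fourier_coe_apply]
  congr 1
  simp
  ring

lemma mFourierCoeff_torusFn {g : (Fin n → ℝ) → E} (hper : TwoPiPeriodic g) (γ : Fin n → ℤ) :
    UnitAddTorus.mFourierCoeff (torusFn g) γ = cubeCoeff g (-γ) := by
  rw [UnitAddTorus.mFourierCoeff_eq_integral _ _ fun _ => -Real.pi / (2 * Real.pi), cubeCoeff,
    cube_eq_box, integral_box_eq]
  simp_rw [mFourier_coe, torusFn_coe hper]

lemma hasSum_scalar {f : (Fin n → ℝ) → ℂ} (hf : Continuous f) (hper : TwoPiPeriodic f)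
    (hs : Summable (cubeCoeff f)) (x : Fin n → ℝ) :
    HasSum (fun γ => charC (-γ) (realIncl n x) • cubeCoeff f γ) (f x) := by
  have hx : (fun i => 2 * Real.pi * (x i / (2 * Real.pi))) = x := by
    ext i
    field_simp
  have hs' : Summable (UnitAddTorus.mFourierCoeff
      (⟨torusFn f, continuous_torusFn hper hf⟩ : C(UnitAddTorus (Fin n), ℂ))) := by
    refine ((Equiv.neg (Fin n → ℤ)).summable_iff.2 hs).congr fun γ => ?_
    exact (mFourierCoeff_torusFn hper γ).symm
  have h := UnitAddTorus.hasSum_mFourier_series_apply_of_summable hs'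
    (fun i => ((x i / (2 * Real.pi) : ℝ) : UnitAddCircle))
  rw [← (Equiv.neg (Fin n → ℤ)).hasSum_iff] at h
  convert h using 1
  · ext γ
    simp only [Function.comp_apply, Equiv.neg_apply, ContinuousMap.coe_mk]
    rw [mFourier_coe, hx, mFourierCoeff_torusFn hper, neg_neg, smul_eq_mul, smul_eq_mul, mul_comm]
  · rw [ContinuousMap.coe_mk, torusFn_coe hper, hx]

/-- Fourier inversion for Hilbert space valued functions with absolutely summable coefficients,
obtained from the scalar case by testing against vectors. -/
lemma hasSum_cubeCoeff {H : Type*} [NormedAddCommGroup H] [InnerProductSpace ℂ H] [CompleteSpace H]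
    {g : (Fin n → ℝ) → H} (hg : Continuous g) (hper : TwoPiPeriodic g)
    (hs : Summable fun γ => ‖cubeCoeff g γ‖) (x : Fin n → ℝ) :
    HasSum (fun γ => charC (-γ) (realIncl n x) • cubeCoeff g γ) (g x) := by
  have hsum : Summable fun γ => charC (-γ) (realIncl n x) • cubeCoeff g γ := by
    refine Summable.of_norm ?_
    simpa only [norm_smul, norm_charC_real, one_mul] using hs
  have key : ∑' γ, charC (-γ) (realIncl n x) • cubeCoeff g γ = g x := by
    refine ext_inner_left ℂ fun v => ?_
    set L := innerSL ℂ v with hL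
    have hLg : ∀ γ, cubeCoeff (fun y => L (g y)) γ = L (cubeCoeff g γ) := by
      intro γ
      rw [cubeCoeff, cubeCoeff, ← Complex.coe_smul, ← Complex.coe_smul, map_smul,
        ← L.integral_comp_comm]
      · simp_rw [map_smul]
      · have hch : Continuous fun β => charC γ (realIncl n β) :=
          (contDiff_charC γ (m := 0)).continuous.comp (realIncl n).continuous
        exact (hch.smul hg).integrableOn_Icc
    have h1 := hasSum_scalar (L.continuous.comp hg) (fun y m => congrArg L (hper y m))
      ((hs.of_norm.mapL L).congr fun γ => (hLg γ).symm) x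
    have h2 := hsum.hasSum.mapL L
    refine h2.unique (h1.congr_fun fun γ => ?_)
    rw [map_smul]
    exact congrArg _ (hLg γ).symm
  exact key ▸ hsum.hasSum

end Inversion

/-! ### The coefficients of a function on the tube -/

section Support

variable {n : ℕ} {G : Set (Fin n → ℝ)}

lemma continuous_dotR (x : Fin n → ℝ) : Continuous fun ξ => dotR ξ x := by
  unfold dotR
  fun_prop

lemma dotR_le_suppFn (hG : IsCompact G) {α : Fin n → ℝ} (hα : α ∈ G) (x : Fin n → ℝ) :
    dotR α x ≤ suppFn G x :=
  le_csSup (hG.image (continuous_dotR x)).bddAbove (Set.mem_image_of_mem _ hα)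

lemma exists_dotR_eq_suppFn (hG : IsCompact G) (hne : G.Nonempty) (x : Fin n → ℝ) :
    ∃ α ∈ G, dotR α x = suppFn G x := by
  obtain ⟨α, hα, h⟩ := hG.exists_sSup_image_eq hne (continuous_dotR x).continuousOn
  exact ⟨α, hα, h.symm⟩

end Support

section Coefficients

variable {n : ℕ} {E : Type*} [NormedAddCommGroup E] [NormedSpace ℂ E]

/-- The Fourier coefficient of `s` computed over the slice of the tube at height `α`. -/
def tubeCoeff (s : (Fin n → ℂ) → E) (γ : Fin n → ℤ) (α : Fin n → ℝ) : E :=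
  ((2 * Real.pi) ^ n : ℝ)⁻¹ • ∫ β in cube n, charC γ (cpt β α) • s (cpt β α)

lemma tubeCoeff_eq (s : (Fin n → ℂ) → E) (γ : Fin n → ℤ) (α : Fin n → ℝ) :
    tubeCoeff s γ α =
      Real.exp (-dotR α fun i => (γ i : ℝ)) • cubeCoeff (fun β => s (cpt β α)) γ := by
  simp_rw [tubeCoeff, cubeCoeff, charC_cpt, mul_smul, integral_smul, dotR]
  rw [smul_comm, Complex.coe_smul]

lemma norm_tubeCoeff (s : (Fin n → ℂ) → E) (γ : Fin n → ℤ) (α : Fin n → ℝ) :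
    ‖tubeCoeff s γ α‖ = Real.exp (-dotR α fun i => (γ i : ℝ)) *
      ‖cubeCoeff (fun β => s (cpt β α)) γ‖ := by
  rw [tubeCoeff_eq, norm_smul, Real.norm_of_nonneg (Real.exp_nonneg _)]

lemma charC_neg_smul_tubeCoeff (s : (Fin n → ℂ) → E) (γ : Fin n → ℤ) (β α : Fin n → ℝ) :
    charC (-γ) (cpt β α) • tubeCoeff s γ α =
      charC (-γ) (realIncl n β) • cubeCoeff (fun β => s (cpt β α)) γ := by
  rw [tubeCoeff_eq, charC_cpt, mul_comm, mul_smul, ← Complex.coe_smul, smul_smul ((_ : ℝ) : ℂ),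
    ← Complex.ofReal_mul, ← Real.exp_add]
  simp [dotR]

lemma tubeCoeff_indep {G : Set (Fin n → ℝ)} (hG : Convex ℝ G) (hi : (interior G).Nonempty)
    {s : (Fin n → ℂ) → E}
    (hper : ∀ k ∈ tubeOver G, ∀ γ : Fin n → ℤ,
      s (k + fun i => ((2 * Real.pi * γ i : ℝ) : ℂ)) = s k)
    (hhol : DifferentiableOn ℂ s (tubeOver (interior G)))
    (hs : ContDiffOn ℝ 1 s (tubeOver G)) (γ : Fin n → ℤ) {α α' : Fin n → ℝ}
    (hα : α ∈ G) (hα' : α' ∈ G) : tubeCoeff s γ α = tubeCoeff s γ α' := by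
  obtain ⟨α₀, hα₀⟩ := hi
  have key : ∀ α ∈ G, tubeCoeff s γ α = tubeCoeff s γ α₀ := fun α hα => by
    rw [tubeCoeff, tubeCoeff, integral_slice_eq (F := fun k => charC γ k • s k) hG
      ((contDiff_real_charC γ).contDiffOn.smul hs)
      (((contDiff_charC γ (m := 1)).differentiable one_ne_zero).differentiableOn.smul hhol)
      (fun k hk m => by rw [hper k hk m, charC_add, charC_period, mul_one]) hα₀ hα]
  rw [key α hα, key α' hα']

/-- Rapid decay of the coefficients of a smooth periodic function, with a constant depending on
`g` only through bounds on two of its derivatives. -/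
lemma norm_cubeCoeff_le {m : ℕ} {N : ℝ} (hN : N ≤ m) {g : (Fin n → ℝ) → E} (hg : ContDiff ℝ m g)
    (hper : TwoPiPeriodic g) {C C₀ : ℝ} (hC : ∀ β, ‖iteratedFDeriv ℝ m g β‖ ≤ C)
    (hC₀ : ∀ β, ‖iteratedFDeriv ℝ 0 g β‖ ≤ C₀) (γ : Fin n → ℤ) :
    ‖cubeCoeff g γ‖ ≤ (((2 * Real.pi) ^ n : ℝ)⁻¹ * ((1 + n) ^ m * C + C₀) * volume.real (cube n)) *
      (1 + enormZ γ) ^ (-N) := by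
  have hCn : 0 ≤ C := (norm_nonneg _).trans (hC 0)
  have hC₀n : 0 ≤ C₀ := (norm_nonneg _).trans (hC₀ 0)
  have he := enormZ_nonneg γ
  set V := volume.real (cube n) with hV
  have hVn : 0 ≤ V := measureReal_nonneg
  set I := ‖∫ β in cube n, charC γ (realIncl n β) • g β‖ with hI
  have hIn : 0 ≤ I := norm_nonneg _
  have key : I * (1 + enormZ γ) ^ N ≤ ((1 + n) ^ m * C + C₀) * V := by
    by_cases hγ : γ = 0
    · have h0 : I ≤ C₀ * V := by
        refine norm_setIntegral_le_of_norm_le_const (isCompact_Icc.measure_lt_top) fun β _ => ?_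
        rw [norm_smul, norm_charC_real, one_mul]
        simpa using hC₀ β
      have h1 : (1 + enormZ γ) ^ N = 1 := by simp [hγ, enormZ]
      rw [h1, mul_one, add_mul]
      exact h0.trans (le_add_of_nonneg_left (by positivity))
    · obtain ⟨j, hj⟩ := one_add_enormZ_le hγ
      have h1 : (1 + enormZ γ) ^ N ≤ ((1 + n) * |(γ j : ℝ)|) ^ m := by
        refine (Real.rpow_le_rpow_of_exponent_le (by linarith) hN).trans ?_
        rw [Real.rpow_natCast]
        exact pow_le_pow_left₀ (by linarith) hj m
      calc I * (1 + enormZ γ) ^ N ≤ I * ((1 + n) * |(γ j : ℝ)|) ^ m := by gcongr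
        _ = (1 + n) ^ m * (|(γ j : ℝ)| ^ m * I) := by
            rw [mul_pow]
            ring
        _ ≤ (1 + n) ^ m * (C * V) := by
            refine mul_le_mul_of_nonneg_left ?_ (by positivity)
            exact pow_mul_norm_integral_le m hg hper hC γ j
        _ ≤ ((1 + n) ^ m * C + C₀) * V := by nlinarith [mul_nonneg hC₀n hVn]
  rw [cubeCoeff, norm_smul, Real.norm_of_nonneg (by positivity), Real.rpow_neg (by linarith),
    ← div_eq_mul_inv, le_div_iff₀ (Real.rpow_pos_of_pos (by linarith) _), mul_assoc, mul_assoc]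
  gcongr

end Coefficients

/-- (Paley–Wiener type inverse statement.) If `s` is continuous and
`2πℤⁿ`-periodic on the closed tube `𝒯_G`, holomorphic in its interior and `C^∞` with
bounded derivatives up to the boundary, then its Fourier coefficients
`s_γ = (2π)^{-n} ∫_{[-π,π]ⁿ} s(β+iα) e^{i(β+iα)·γ} dβ` do not depend on `α ∈ G`, decay
like `C_N (1+|γ|)^{-N} e^{-h_G(γ)}` for every `N > 0`, and
`s(k) = ∑_γ s_γ e^{-i k·γ}` on `𝒯_G`. -/
theorem fourier_coefficients_of_tube_function {n : ℕ} {H : Type*}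
    [NormedAddCommGroup H] [InnerProductSpace ℂ H] [CompleteSpace H]
    (G : Set (Fin n → ℝ)) (hGcomp : IsCompact G) (hGconv : Convex ℝ G)
    (hGint : (interior G).Nonempty)
    (s : (Fin n → ℂ) → H)
    (hcont : ContinuousOn s (tubeOver G))
    (hper : ∀ k ∈ tubeOver G, ∀ γ : Fin n → ℤ,
      s (k + fun i => ((2 * Real.pi * γ i : ℝ) : ℂ)) = s k)
    (hhol : DifferentiableOn ℂ s {k : Fin n → ℂ | (fun i => (k i).im) ∈ interior G})
    (hsmooth : ∀ m : ℕ, ContDiffOn ℝ m s (tubeOver G))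
    (hbdd : ∀ m : ℕ, ∃ C : ℝ, ∀ k ∈ tubeOver G,
      ‖iteratedFDerivWithin ℝ m s (tubeOver G) k‖ ≤ C)
    (coef : (Fin n → ℤ) → (Fin n → ℝ) → H)
    (hcoef : coef = fun γ α => ((2 * Real.pi) ^ n : ℝ)⁻¹ •
      ∫ β in Set.Icc (fun _ => -Real.pi : Fin n → ℝ) (fun _ => Real.pi),
        Complex.exp (Complex.I * ∑ i, ((β i : ℂ) + (α i : ℂ) * Complex.I) * (γ i : ℂ)) •
          s (fun i => (β i : ℂ) + (α i : ℂ) * Complex.I)) :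
    (∀ γ : Fin n → ℤ, ∀ α ∈ G, ∀ α' ∈ G, coef γ α = coef γ α') ∧
    (∀ N : ℝ, 0 < N → ∃ C : ℝ, ∀ γ : Fin n → ℤ, ∀ α ∈ G,
      ‖coef γ α‖ ≤ C * (1 + enormZ γ) ^ (-N) *
        Real.exp (-suppFn G fun i => (γ i : ℝ))) ∧
    (∀ α ∈ G, ∀ k ∈ tubeOver G, HasSum
      (fun γ : Fin n → ℤ =>
        Complex.exp (-(Complex.I * ∑ i, k i * (γ i : ℂ))) • coef γ α) (s k)) := by
  have hne : G.Nonempty := hGint.mono interior_subset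
  have hcf : ∀ γ α, coef γ α = tubeCoeff s γ α := fun γ α => by rw [hcoef]; rfl
  simp only [hcf]
  have hindep : ∀ γ : Fin n → ℤ, ∀ α ∈ G, ∀ α' ∈ G, tubeCoeff s γ α = tubeCoeff s γ α' :=
    fun γ α hα α' hα' =>
      tubeCoeff_indep hGconv hGint hper hhol (by exact_mod_cast hsmooth 1) γ hα hα'
  have hdecay : ∀ N : ℝ, ∃ C : ℝ, ∀ γ : Fin n → ℤ, ∀ α ∈ G,
      ‖tubeCoeff s γ α‖ ≤ C * (1 + enormZ γ) ^ (-N) *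
        Real.exp (-suppFn G fun i => (γ i : ℝ)) := by
    intro N
    obtain ⟨C, hC⟩ := hbdd ⌈N⌉₊
    obtain ⟨C₀, hC₀⟩ := hbdd 0
    refine ⟨((2 * Real.pi) ^ n : ℝ)⁻¹ * ((1 + n) ^ ⌈N⌉₊ * C + C₀) * volume.real (cube n),
      fun γ α hα => ?_⟩
    -- the slice through a maximizer of `ξ ↦ ξ·γ` carries the optimal exponential factor
    obtain ⟨α₁, hα₁, hmax⟩ := exists_dotR_eq_suppFn hGcomp hne fun i => (γ i : ℝ)
    rw [hindep γ α hα α₁ hα₁, norm_tubeCoeff, hmax, mul_comm]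
    gcongr
    exact norm_cubeCoeff_le (Nat.le_ceil N) (contDiff_slice (hsmooth _) hα₁)
      (periodic_slice hper hα₁)
      (norm_iteratedFDeriv_slice_le hGconv hGint (hsmooth _) hC hα₁)
      (norm_iteratedFDeriv_slice_le hGconv hGint (hsmooth 0) hC₀ hα₁) γ
  refine ⟨hindep, fun N _ => hdecay N, fun α hα k hk => ?_⟩
  set β₀ : Fin n → ℝ := fun i => (k i).re
  set α₀ : Fin n → ℝ := fun i => (k i).im
  have hα₀ : α₀ ∈ G := hk
  have hk₀ : cpt β₀ α₀ = k := cpt_re_im k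
  obtain ⟨C, hC⟩ := hdecay (2 * n + 1)
  have hsum : Summable fun γ => ‖cubeCoeff (fun β => s (cpt β α₀)) γ‖ := by
    refine Summable.of_nonneg_of_le (fun γ => norm_nonneg _) (fun γ => ?_)
      ((summable_one_add_enormZ_rpow (n := n)).mul_left C)
    have h1 := hC γ α₀ hα₀
    have h2 : Real.exp (-suppFn G fun i => (γ i : ℝ)) ≤
        Real.exp (-dotR α₀ fun i => (γ i : ℝ)) :=
      Real.exp_le_exp.2 (neg_le_neg (dotR_le_suppFn hGcomp hα₀ _))
    rw [norm_tubeCoeff] at h1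
    have h3 : 0 ≤ C * (1 + enormZ γ) ^ (-(2 * (n : ℝ) + 1)) :=
      nonneg_of_mul_nonneg_left ((mul_nonneg (Real.exp_nonneg _) (norm_nonneg _)).trans h1)
        (Real.exp_pos _)
    have h4 := h1.trans (mul_le_mul_of_nonneg_left h2 h3)
    rw [mul_comm] at h4
    exact le_of_mul_le_mul_right h4 (Real.exp_pos _)
  have h := hasSum_cubeCoeff (contDiff_slice (hsmooth 0) hα₀).continuous
    (periodic_slice hper hα₀) hsum β₀
  simp only [hk₀] at h
  refine h.congr_fun fun γ => ?_
  rw [← charC_neg_smul_tubeCoeff, hk₀, hindep γ α hα α₀ hα₀]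
  congr 1
  simp [charC]
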